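/- Let S ⊆ ℕ be a finite-rank Bohr₀ set, let α ∈ ℝ^m be such that 1, α₁, …, α_m are linearly independent over ℚ, and let I ⊆ 𝕋^m be a cube (a product of m intervals). Then lim_{N−M→∞} |{n ∈ S ∩ [M, N) : n²α mod ℤ^m ∈ I}| / |S ∩ [M, N)| = μ_{𝕋^m}(I), where μ_{𝕋^m} is the Haar probability measure on 𝕋^m; that is, for every ε > 0 there exists L such that for all M < N with N − M > L, the set S ∩ [M, N) is nonempty and the displayed ratio differs from μ_{𝕋^m}(I) by less than ε. -/

import Mathlib

open MeasureTheory

/-- A finite-rank Bohr₀ set: `{n : ℕ | ‖nβ‖ < δ}` for some `β` in a finite-dimensional torus. -/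
def IsFiniteRankBohr0 (S : Set ℕ) : Prop :=
  ∃ (r : ℕ) (β : Fin r → AddCircle (1 : ℝ)) (δ : ℝ), 0 < δ ∧
    S = {n : ℕ | ∀ j, ‖n • β j‖ < δ}

/-- A complex sequence whose averages over intervals `[M, N)` tend to zero as `N - M → ∞`,
uniformly in the position of the interval. -/
def UniformlyNull (u : ℕ → ℂ) : Prop :=
  ∀ ε : ℝ, 0 < ε → ∃ L : ℕ, ∀ M N : ℕ, L ≤ N - M →
    ‖∑ n ∈ Finset.Ico M N, u n‖ ≤ ε * (N - M : ℕ)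

theorem norm_sum_shift_sub_sum_le {a : ℕ → ℂ} (ha : ∀ n, ‖a n‖ ≤ 1) (M N h : ℕ) :
    ‖∑ n ∈ Finset.Ico M N, a (n + h) - ∑ n ∈ Finset.Ico M N, a n‖ ≤ 2 * h := by
  induction h with
  | zero => simp
  | succ h ih =>
    have key : ‖∑ n ∈ Finset.Ico M N, a (n + (h + 1)) - ∑ n ∈ Finset.Ico M N, a (n + h)‖ ≤ 2 := by
      rw [← Finset.sum_sub_distrib, Finset.sum_Ico_eq_sum_range]
      have := Finset.sum_range_sub (fun i => a (M + i + h)) (N - M)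
      simp only [← add_assoc] at this ⊢
      simp only [add_right_comm _ _ 1] at this ⊢
      rw [this]
      exact (norm_sub_le _ _).trans (by linarith [ha (M + (N - M) + h), ha (M + 0 + h)])
    push_cast
    calc _ = ‖(∑ n ∈ Finset.Ico M N, a (n + (h + 1)) - ∑ n ∈ Finset.Ico M N, a (n + h)) +
          (∑ n ∈ Finset.Ico M N, a (n + h) - ∑ n ∈ Finset.Ico M N, a n)‖ := by
            rw [sub_add_sub_cancel]
      _ ≤ _ := (norm_add_le _ _).trans (by linarith)

namespace UniformlyNull

theorem zero : UniformlyNull fun _ => 0 := by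
  intro ε hε
  refine ⟨0, fun M N _ => ?_⟩
  simp only [Finset.sum_const_zero, norm_zero]
  positivity

theorem add {u v : ℕ → ℂ} (hu : UniformlyNull u) (hv : UniformlyNull v) :
    UniformlyNull fun n => u n + v n := by
  intro ε hε
  obtain ⟨L₁, h₁⟩ := hu (ε / 2) (by positivity)
  obtain ⟨L₂, h₂⟩ := hv (ε / 2) (by positivity)
  refine ⟨max L₁ L₂, fun M N h => ?_⟩
  rw [Finset.sum_add_distrib]
  have h3 := h₁ M N (le_trans (le_max_left _ _) h)
  have h4 := h₂ M N (le_trans (le_max_right _ _) h)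
  linarith [norm_add_le (∑ n ∈ Finset.Ico M N, u n) (∑ n ∈ Finset.Ico M N, v n)]

theorem const_mul {u : ℕ → ℂ} (hu : UniformlyNull u) (c : ℂ) :
    UniformlyNull fun n => c * u n := by
  intro ε hε
  obtain ⟨L, h⟩ := hu (ε / (‖c‖ + 1)) (by positivity)
  refine ⟨L, fun M N hL => ?_⟩
  rw [← Finset.mul_sum, norm_mul]
  calc ‖c‖ * ‖∑ n ∈ Finset.Ico M N, u n‖ ≤ (‖c‖ + 1) * (ε / (‖c‖ + 1) * (N - M : ℕ)) := by
        gcongr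
        · linarith
        · exact h M N hL
    _ = ε * (N - M : ℕ) := by field_simp

/-- A sequence that can be approximated in mean by uniformly null sequences is uniformly null. -/
theorem of_approx {u : ℕ → ℂ}
    (h : ∀ ε : ℝ, 0 < ε → ∃ v : ℕ → ℂ, UniformlyNull v ∧ ∃ L : ℕ, ∀ M N : ℕ, L ≤ N - M →
      ∑ n ∈ Finset.Ico M N, ‖u n - v n‖ ≤ ε * (N - M : ℕ)) :
    UniformlyNull u := by
  intro ε hε
  obtain ⟨v, hv, L₁, h₁⟩ := h (ε / 2) (by positivity)
  obtain ⟨L₂, h₂⟩ := hv (ε / 2) (by positivity)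
  refine ⟨max L₁ L₂, fun M N h => ?_⟩
  have h3 := h₁ M N (le_trans (le_max_left _ _) h)
  have h4 := h₂ M N (le_trans (le_max_right _ _) h)
  have h5 : ∑ n ∈ Finset.Ico M N, u n =
      ∑ n ∈ Finset.Ico M N, (u n - v n) + ∑ n ∈ Finset.Ico M N, v n := by
    rw [← Finset.sum_add_distrib]
    simp
  rw [h5]
  linarith [norm_add_le (∑ n ∈ Finset.Ico M N, (u n - v n)) (∑ n ∈ Finset.Ico M N, v n),
    norm_sum_le (Finset.Ico M N) fun n => u n - v n]

/-- A geometric sequence on the unit circle with ratio different from `1` is uniformly null. -/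
theorem pow {z : ℂ} (hz : ‖z‖ = 1) (hz1 : z ≠ 1) : UniformlyNull fun n => z ^ n := by
  intro ε hε
  have hpos : 0 < ‖z - 1‖ := norm_pos_iff.2 (sub_ne_zero.2 hz1)
  obtain ⟨L, hL⟩ := exists_nat_ge (2 / ‖z - 1‖ / ε)
  refine ⟨L, fun M N h => ?_⟩
  have hLN : (L : ℝ) ≤ (N - M : ℕ) := by exact_mod_cast h
  rw [Finset.sum_Ico_eq_sum_range]
  simp only [pow_add]
  rw [← Finset.mul_sum, geom_sum_eq hz1, norm_mul, norm_pow, hz, one_pow, one_mul, norm_div]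
  have h1 : ‖z ^ (N - M) - 1‖ ≤ 2 := by
    refine (norm_sub_le _ _).trans ?_
    rw [norm_pow, hz, one_pow, norm_one]
    norm_num
  calc ‖z ^ (N - M) - 1‖ / ‖z - 1‖ ≤ 2 / ‖z - 1‖ := by gcongr
    _ ≤ ε * (N - M : ℕ) := by
        rw [div_le_iff₀ hε] at hL
        nlinarith

open ComplexConjugate in
/-- **Van der Corput's lemma**: a bounded sequence whose shifted correlations are uniformly null
is uniformly null. -/
theorem of_correlation {a : ℕ → ℂ} (ha : ∀ n, ‖a n‖ ≤ 1)
    (h : ∀ i j, i ≠ j → UniformlyNull fun n => a (n + i) * conj (a (n + j))) :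
    UniformlyNull a := by
  intro ε hε
  obtain ⟨D, hD⟩ := exists_nat_ge (8 / ε ^ 2 + 1)
  have hDpos : (0 : ℝ) < D := lt_of_lt_of_le (by positivity) hD
  have hex : ∀ i j, ∃ L : ℕ, ∀ M N : ℕ, L ≤ N - M →
      ‖∑ n ∈ Finset.Ico M N, a (n + i) * conj (a (n + j))‖ ≤
        (if i = j then ((N - M : ℕ) : ℝ) else 0) + 1 / D * (N - M : ℕ) := by
    intro i j
    by_cases hij : i = j
    · refine ⟨0, fun M N _ => ?_⟩
      rw [if_pos hij]
      have : ‖∑ n ∈ Finset.Ico M N, a (n + i) * conj (a (n + j))‖ ≤ ∑ n ∈ Finset.Ico M N, 1 := by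
        refine norm_sum_le_of_le _ fun n _ => ?_
        rw [norm_mul, RCLike.norm_conj]
        exact mul_le_one₀ (ha _) (norm_nonneg _) (ha _)
      simp at this
      have h2 : 0 ≤ 1 / (D : ℝ) * (N - M : ℕ) := by positivity
      simp only [one_div] at h2 ⊢
      linarith
    · obtain ⟨L, hL⟩ := h i j hij (1 / D) (by positivity)
      refine ⟨L, fun M N hMN => ?_⟩
      rw [if_neg hij, zero_add]
      exact hL M N hMN
  choose L hL using hex
  obtain ⟨L', hL'⟩ := exists_nat_ge (4 * D / ε)
  refine ⟨max L' (∑ i ∈ Finset.range D, ∑ j ∈ Finset.range D, L i j), fun M N hMN => ?_⟩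
  set K : ℝ := ((N - M : ℕ) : ℝ) with hK
  have hK0 : 0 ≤ K := by positivity
  set T := ∑ n ∈ Finset.Ico M N, a n with hT
  set b : ℕ → ℂ := fun n => ∑ i ∈ Finset.range D, a (n + i) with hb
  have hKbig : 4 * D ≤ ε * K := by
    have : (L' : ℝ) ≤ K := by
      rw [hK]
      exact_mod_cast (le_max_left _ _).trans hMN
    rw [div_le_iff₀ hε] at hL'
    nlinarith
  have herr : ‖∑ n ∈ Finset.Ico M N, b n - D * T‖ ≤ 2 * D * D := by
    have : ∑ n ∈ Finset.Ico M N, b n - D * T =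
        ∑ i ∈ Finset.range D, (∑ n ∈ Finset.Ico M N, a (n + i) - T) := by
      rw [Finset.sum_comm, Finset.sum_sub_distrib]
      simp
    rw [this]
    calc _ ≤ ∑ i ∈ Finset.range D, (2 * D : ℝ) := by
          refine norm_sum_le_of_le _ fun i hi => (norm_sum_shift_sub_sum_le ha M N i).trans ?_
          have : (i : ℝ) ≤ D := by exact_mod_cast (Finset.mem_range.1 hi).le
          linarith
      _ = 2 * D * D := by simp; ring
  have hsq : ∑ n ∈ Finset.Ico M N, ‖b n‖ ^ 2 ≤ 2 * D * K := by
    have h1 : ((∑ n ∈ Finset.Ico M N, ‖b n‖ ^ 2 : ℝ) : ℂ) =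
        ∑ i ∈ Finset.range D, ∑ j ∈ Finset.range D,
          ∑ n ∈ Finset.Ico M N, a (n + i) * conj (a (n + j)) := by
      push_cast
      simp_rw [← Complex.mul_conj', hb, map_sum, Finset.sum_mul_sum]
      rw [Finset.sum_comm]
      refine Finset.sum_congr rfl fun i _ => ?_
      rw [Finset.sum_comm]
    have h2 : ∑ n ∈ Finset.Ico M N, ‖b n‖ ^ 2 =
        ‖((∑ n ∈ Finset.Ico M N, ‖b n‖ ^ 2 : ℝ) : ℂ)‖ := by
      rw [Complex.norm_real, Real.norm_of_nonneg (by positivity)]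
    rw [h2, h1]
    calc _ ≤ ∑ i ∈ Finset.range D, ∑ j ∈ Finset.range D,
          ((if i = j then K else 0) + 1 / D * K) := by
          refine norm_sum_le_of_le _ fun i hi => norm_sum_le_of_le _ fun j hj => hL i j M N ?_
          refine le_trans ?_ ((le_max_right _ _).trans hMN)
          refine le_trans ?_ (Finset.single_le_sum (fun i _ => Nat.zero_le _) hi)
          exact Finset.single_le_sum (f := fun j => L i j) (fun i _ => Nat.zero_le _) hj
      _ = 2 * D * K := by
          simp only [Finset.sum_add_distrib, Finset.sum_ite_eq, Finset.sum_ite_mem,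
            Finset.inter_self, Finset.sum_const, Finset.card_range, nsmul_eq_mul]
          field_simp
          ring
  have hcs : ‖∑ n ∈ Finset.Ico M N, b n‖ ^ 2 ≤ K * (2 * D * K) := by
    calc _ ≤ (∑ n ∈ Finset.Ico M N, ‖b n‖) ^ 2 := by
          gcongr
          exact norm_sum_le _ _
      _ ≤ K * ∑ n ∈ Finset.Ico M N, ‖b n‖ ^ 2 := by
          have := sq_sum_le_card_mul_sum_sq (s := Finset.Ico M N) (f := fun n => ‖b n‖)
          rwa [Nat.card_Ico] at this
      _ ≤ _ := by gcongr
  have hb2 : ‖∑ n ∈ Finset.Ico M N, b n‖ ≤ D * (ε / 2 * K) := by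
    refine abs_le_of_sq_le_sq' ?_ (by positivity) |>.2
    refine hcs.trans ?_
    have h8 : 8 ≤ D * ε ^ 2 := by
      have : 8 / ε ^ 2 ≤ D := by linarith
      rwa [div_le_iff₀ (by positivity)] at this
    have : 0 ≤ (D * ε ^ 2 - 8) * (D * K ^ 2 / 4) := mul_nonneg (by linarith) (by positivity)
    nlinarith
  have hDT : D * ‖T‖ ≤ D * (ε * K) := by
    have h1 : D * ‖T‖ = ‖(D : ℂ) * T‖ := by simp
    rw [h1]
    have h2 : (D : ℂ) * T = ∑ n ∈ Finset.Ico M N, b n - (∑ n ∈ Finset.Ico M N, b n - D * T) := by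
      ring
    rw [h2]
    refine (norm_sub_le _ _).trans ?_
    nlinarith
  exact le_of_mul_le_mul_left hDT hDpos

end UniformlyNull

theorem Set.Finite.exists_pos_forall_pos_le {s : Set ℝ} (hs : s.Finite) :
    ∃ η : ℝ, 0 < η ∧ ∀ y ∈ s, 0 < y → η ≤ y := by
  induction s, hs using Set.Finite.induction_on with
  | empty => exact ⟨1, one_pos, by simp⟩
  | @insert a s _ _ ih =>
    obtain ⟨η, hη, h⟩ := ih
    by_cases ha : 0 < a
    · refine ⟨min a η, lt_min ha hη, ?_⟩
      rintro y (rfl | hy) hpos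
      · exact min_le_left _ _
      · exact (min_le_right _ _).trans (h y hy hpos)
    · refine ⟨η, hη, ?_⟩
      rintro y (rfl | hy) hpos
      · exact absurd hpos ha
      · exact h y hy hpos

/-- A set of naturals with all gaps at least `D` has few elements in an interval. -/
theorem card_filter_Ico_le_of_gaps (p : ℕ → Prop) [DecidablePred p] {D : ℕ} (hD : 0 < D)
    (hp : ∀ n n', p n → p n' → n < n' → n + D ≤ n') (M N : ℕ) :
    ((Finset.Ico M N).filter p).card ≤ (N - M) / D + 1 := by
  rw [← Finset.card_range ((N - M) / D + 1)]
  refine Finset.card_le_card_of_injOn (fun n => (n - M) / D) ?_ ?_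
  · intro n hn
    simp only [Finset.coe_filter, Finset.mem_Ico, Set.mem_ofPred_eq] at hn
    simp only [Finset.coe_range, Set.mem_Iio, Nat.lt_succ_iff]
    exact Nat.div_le_div_right (by omega)
  · have key : ∀ n n', M ≤ n → p n → p n' → n < n' → (n - M) / D < (n' - M) / D := by
      intro n n' hM h h' hlt
      have h1 := hp n n' h h' hlt
      calc (n - M) / D < (n - M) / D + 1 := Nat.lt_succ_self _
        _ = (n - M + D) / D := (Nat.add_div_right _ hD).symm
        _ ≤ _ := Nat.div_le_div_right (by omega)
    intro n hn n' hn' heq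
    simp only [Finset.coe_filter, Finset.mem_Ico, Set.mem_ofPred_eq] at hn hn'
    dsimp only at heq
    rcases lt_trichotomy n n' with h | h | h
    · exact absurd heq (key n n' hn.1.1 hn.2 hn'.2 h).ne
    · exact h
    · exact absurd heq (key n' n hn'.1.1 hn'.2 hn.2 h).ne'

namespace AddCircle

/-- **Weyl's theorem** for quadratic phases, uniformly over intervals. -/
theorem uniformlyNull_toCircle_sq {γ : AddCircle (1 : ℝ)} (hγ : ¬ IsOfFinAddOrder γ)
    (θ : AddCircle (1 : ℝ)) :
    UniformlyNull fun n => (toCircle (n ^ 2 • γ + n • θ) : ℂ) := by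
  refine UniformlyNull.of_correlation (fun n => (Circle.norm_coe _).le) fun i j hij => ?_
  have hz : toCircle ((2 * ((i : ℤ) - j)) • γ) ≠ 1 := by
    rw [← toCircle_zero (T := 1)]
    intro h
    have h0 := injective_toCircle one_ne_zero h
    refine hγ (isOfFinAddOrder_iff_zsmul_eq_zero.2 ⟨_, ?_, h0⟩)
    omega
  have hnull := (UniformlyNull.pow (Circle.norm_coe _) (Circle.coe_eq_one.not.2 hz)).const_mul
    (toCircle (((i : ℤ) ^ 2 - (j : ℤ) ^ 2) • γ + ((i : ℤ) - j) • θ) : ℂ)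
  convert hnull using 2 with n
  rw [← Circle.coe_inv_eq_conj, ← toCircle_neg, ← Circle.coe_mul, ← toCircle_add, ← Circle.coe_pow,
    ← toCircle_nsmul, ← Circle.coe_mul, ← toCircle_add]
  congr 2
  simp only [← natCast_zsmul]
  push_cast
  module

theorem exists_coe_eq_abs_eq_norm (x : AddCircle (1 : ℝ)) :
    ∃ t : ℝ, (t : AddCircle (1 : ℝ)) = x ∧ |t| = ‖x‖ := by
  induction x using QuotientAddGroup.induction_on with
  | H t =>
    refine ⟨t - round t, ?_, ?_⟩
    · rw [coe_sub, sub_eq_self]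
      exact coe_eq_zero_iff 1 |>.2 ⟨round t, by simp⟩
    · rw [norm_eq]
      simp

/-- If no small positive multiple of `β` is close to `0`, multiples of `β` rarely visit a short
arc. -/
theorem card_filter_nsmul_mem_arc_le {β : AddCircle (1 : ℝ)} {η : ℝ} {D : ℕ}
    (hD : 0 < D) (hη : ∀ d : ℕ, 0 < d → d < D → η ≤ ‖d • β‖) (c : ℝ)
    (p : ℕ → Prop) [DecidablePred p]
    (hp : ∀ n, p n → ∃ t : ℝ, (t : AddCircle (1 : ℝ)) = n • β ∧ c < t ∧ t < c + η) (M N : ℕ) :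
    ((Finset.Ico M N).filter p).card ≤ (N - M) / D + 1 := by
  refine card_filter_Ico_le_of_gaps p hD (fun n n' h h' hlt => ?_) M N
  by_contra! hlt'
  obtain ⟨t, ht, ht1, ht2⟩ := hp n h
  obtain ⟨t', ht', ht1', ht2'⟩ := hp n' h'
  have h1 := hη (n' - n) (by omega) (by omega)
  have h2 : (n' - n) • β = ((t' - t : ℝ) : AddCircle (1 : ℝ)) := by
    rw [coe_sub, ht, ht', sub_nsmul _ hlt.le, sub_eq_add_neg]
  have h3 : ‖((t' - t : ℝ) : AddCircle (1 : ℝ))‖ ≤ |t' - t| := by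
    rw [norm_eq]
    simpa using round_le (t' - t) 0
  have h4 : |t' - t| < η := by
    rw [abs_lt]
    constructor <;> linarith
  rw [h2] at h1
  linarith

/-- Along the multiples of `β`, only a small proportion of points of a ball around `0` lie near its
boundary. -/
theorem exists_sum_annulus_le (β : AddCircle (1 : ℝ)) (δ : ℝ) {ε : ℝ} (hε : 0 < ε) :
    ∃ η : ℝ, 0 < η ∧ ∃ L : ℕ, ∀ M N : ℕ, L ≤ N - M →
      (((Finset.Ico M N).filter fun n => δ - η < ‖n • β‖ ∧ ‖n • β‖ < δ).card : ℝ) ≤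
        ε * (N - M : ℕ) := by
  by_cases hβ : IsOfFinAddOrder β
  · have hfin : (Set.range fun n : ℕ => δ - ‖n • β‖).Finite := by
      have h1 : (Set.range fun n : ℕ => n • β).Finite := finite_multiples.2 hβ
      refine (h1.image fun x => δ - ‖x‖).subset ?_
      rintro _ ⟨n, rfl⟩
      exact ⟨_, ⟨n, rfl⟩, rfl⟩
    obtain ⟨η, hη, h⟩ := hfin.exists_pos_forall_pos_le
    refine ⟨η, hη, 0, fun M N _ => ?_⟩
    rw [Finset.filter_false_of_mem]
    · simp only [Finset.card_empty, Nat.cast_zero]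
      positivity
    · rintro n - ⟨h1, h2⟩
      have := h _ ⟨n, rfl⟩ (sub_pos.2 h2)
      linarith
  · obtain ⟨D, hD⟩ := exists_nat_ge (4 / ε + 1)
    have hD0 : (0 : ℝ) < D := lt_of_lt_of_le (by positivity) hD
    have hfin : ((fun d : ℕ => ‖d • β‖) '' Set.Iio D).Finite := (Set.finite_Iio D).image _
    obtain ⟨η, hη, h⟩ := hfin.exists_pos_forall_pos_le
    have hgap : ∀ d : ℕ, 0 < d → d < D → η ≤ ‖d • β‖ := by
      intro d hd hdD
      refine h _ ⟨d, hdD, rfl⟩ (norm_pos_iff.2 fun h0 => hβ ?_)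
      exact isOfFinAddOrder_iff_nsmul_eq_zero.2 ⟨d, hd, h0⟩
    obtain ⟨L, hL⟩ := exists_nat_ge (4 / ε)
    refine ⟨η, hη, L, fun M N hMN => ?_⟩
    classical
    have h1 := card_filter_nsmul_mem_arc_le (Nat.cast_pos.1 hD0) hgap (δ - η)
      (fun n => ∃ t : ℝ, (t : AddCircle (1 : ℝ)) = n • β ∧ δ - η < t ∧ t < δ - η + η)
      (fun n h => h) M N
    have h2 := card_filter_nsmul_mem_arc_le (Nat.cast_pos.1 hD0) hgap (-δ)
      (fun n => ∃ t : ℝ, (t : AddCircle (1 : ℝ)) = n • β ∧ -δ < t ∧ t < -δ + η)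
      (fun n h => h) M N
    have h3 := (Finset.card_le_card (s := (Finset.Ico M N).filter
      fun n => δ - η < ‖n • β‖ ∧ ‖n • β‖ < δ) (t := _ ∪ _) ?_).trans
        ((Finset.card_union_le _ _).trans (add_le_add h1 h2))
    · have h4 : (((N - M) / D : ℕ) : ℝ) ≤ (N - M : ℕ) / D := Nat.cast_div_le
      have h5 : ((N - M : ℕ) : ℝ) / D ≤ ε / 4 * (N - M : ℕ) := by
        rw [div_le_iff₀ hD0]
        have : 1 ≤ ε / 4 * D := by
          have h6 : 4 / ε ≤ D := by linarith
          rw [div_le_iff₀ hε] at h6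
          linarith
        nlinarith [(Nat.cast_nonneg (N - M) : (0 : ℝ) ≤ _)]
      have h7 : (4 : ℝ) ≤ ε * (N - M : ℕ) := by
        have : (L : ℝ) ≤ (N - M : ℕ) := by exact_mod_cast hMN
        rw [div_le_iff₀ hε] at hL
        nlinarith
      have h8 : (((Finset.Ico M N).filter fun n => δ - η < ‖n • β‖ ∧ ‖n • β‖ < δ).card : ℝ) ≤
          ((N - M) / D : ℕ) + 1 + (((N - M) / D : ℕ) + 1) := by exact_mod_cast h3
      linarith
    · intro n hn
      rw [Finset.mem_filter] at hn
      rw [Finset.mem_union, Finset.mem_filter, Finset.mem_filter]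
      obtain ⟨hn, hn1, hn2⟩ := hn
      obtain ⟨t, ht, htn⟩ := exists_coe_eq_abs_eq_norm (n • β)
      rw [← htn] at hn1 hn2
      rcases abs_choice t with h | h
      · exact Or.inl ⟨hn, t, ht, by linarith, by linarith⟩
      · exact Or.inr ⟨hn, t, ht, by linarith, by linarith⟩

end AddCircle

namespace UniformlyNull

open AddCircle

variable {u : ℕ → ℂ}

theorem mul_continuous (hu : ∀ n, ‖u n‖ ≤ 1)
    (h : ∀ θ : AddCircle (1 : ℝ), UniformlyNull fun n => u n * toCircle (n • θ))
    (β : AddCircle (1 : ℝ)) (f : C(AddCircle (1 : ℝ), ℂ)) (θ : AddCircle (1 : ℝ)) :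
    UniformlyNull fun n => u n * f (n • β) * toCircle (n • θ) := by
  have hspan : ∀ p ∈ Submodule.span ℂ (Set.range (fourier (T := 1))),
      UniformlyNull fun n => u n * p (n • β) * toCircle (n • θ) := by
    intro p hp
    induction hp using Submodule.span_induction with
    | mem p hp =>
      obtain ⟨k, rfl⟩ := hp
      convert h (k • β + θ) using 2 with n
      rw [fourier_apply, mul_assoc, ← Circle.coe_mul, ← toCircle_add, smul_add, smul_comm]
    | zero => simpa using zero
    | add p q _ _ hp hq => simpa [mul_add, add_mul] using hp.add hq
    | smul c p _ hp =>
      convert hp.const_mul c using 2 with n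
      simp only [ContinuousMap.smul_apply, smul_eq_mul]
      ring
  refine of_approx fun ε hε => ?_
  have hf : f ∈ closure (Submodule.span ℂ (Set.range (fourier (T := 1))) :
      Set C(AddCircle (1 : ℝ), ℂ)) := by
    rw [← Submodule.topologicalClosure_coe, span_fourier_closure_eq_top]
    trivial
  obtain ⟨p, hp, hfp⟩ := Metric.mem_closure_iff.1 hf ε hε
  refine ⟨_, hspan p hp, 0, fun M N _ => ?_⟩
  calc _ ≤ ∑ n ∈ Finset.Ico M N, ε := by
        refine Finset.sum_le_sum fun n _ => ?_
        rw [← sub_mul, ← mul_sub, norm_mul, norm_mul, Circle.norm_coe, mul_one, ← dist_eq_norm]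
        have h1 := (ContinuousMap.dist_apply_le_dist (f := f) (g := p) (n • β)).trans hfp.le
        calc _ ≤ 1 * ε := by
              gcongr
              exact hu n
          _ = ε := one_mul ε
    _ = ε * (N - M : ℕ) := by simp [mul_comm]

open Classical in
theorem mul_ball (hu : ∀ n, ‖u n‖ ≤ 1)
    (h : ∀ θ : AddCircle (1 : ℝ), UniformlyNull fun n => u n * toCircle (n • θ))
    (β : AddCircle (1 : ℝ)) (δ : ℝ) (θ : AddCircle (1 : ℝ)) :
    UniformlyNull fun n => u n * (if ‖n • β‖ < δ then 1 else 0) * toCircle (n • θ) := by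
  refine of_approx fun ε hε => ?_
  obtain ⟨η, hη, L, hL⟩ := exists_sum_annulus_le β δ hε
  let f : C(AddCircle (1 : ℝ), ℂ) :=
    ⟨fun x => ((max 0 (min 1 ((δ - ‖x‖) / η)) : ℝ) : ℂ), by fun_prop⟩
  refine ⟨_, mul_continuous hu h β f θ, L, fun M N hMN => le_trans ?_ (hL M N hMN)⟩
  rw [Finset.card_filter]
  push_cast
  refine Finset.sum_le_sum fun n _ => ?_
  rw [← sub_mul, ← mul_sub, norm_mul, norm_mul, Circle.norm_coe, mul_one]
  refine (mul_le_of_le_one_left (norm_nonneg _) (hu n)).trans ?_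
  have hcast : ((if ‖n • β‖ < δ then 1 else 0 : ℂ) - f (n • β)) =
      (((if ‖n • β‖ < δ then 1 else 0) - max 0 (min 1 ((δ - ‖n • β‖) / η)) : ℝ) : ℂ) := by
    simp only [f, ContinuousMap.coe_mk]
    push_cast
    split_ifs <;> simp
  rw [hcast, Complex.norm_real, Real.norm_eq_abs]
  by_cases h1 : ‖n • β‖ < δ
  · by_cases h2 : δ - η < ‖n • β‖
    · rw [if_pos h1, if_pos ⟨h2, h1⟩, abs_le]
      have := min_le_left 1 ((δ - ‖n • β‖) / η)
      constructor
      · have := max_le zero_le_one this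
        linarith
      · have := le_max_left 0 (min 1 ((δ - ‖n • β‖) / η))
        linarith
    · have h3 : 1 ≤ (δ - ‖n • β‖) / η := by
        rw [le_div_iff₀ hη]
        linarith
      rw [if_pos h1, if_neg fun h => h2 h.1, min_eq_left h3, max_eq_right zero_le_one, sub_self,
        abs_zero]
  · have h3 : (δ - ‖n • β‖) / η ≤ 0 := div_nonpos_of_nonpos_of_nonneg (by linarith) hη.le
    rw [if_neg h1, if_neg fun h => h1 h.2, max_eq_left ((min_le_right _ _).trans h3), sub_self,
      abs_zero]

open Classical in
theorem mul_prod_ball (hu : ∀ n, ‖u n‖ ≤ 1)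
    (h : ∀ θ : AddCircle (1 : ℝ), UniformlyNull fun n => u n * toCircle (n • θ))
    {ι : Type*} (β : ι → AddCircle (1 : ℝ)) (δ : ℝ) (J : Finset ι) (θ : AddCircle (1 : ℝ)) :
    UniformlyNull fun n =>
      u n * (if ∀ j ∈ J, ‖n • β j‖ < δ then 1 else 0) * toCircle (n • θ) := by
  induction J using Finset.induction_on generalizing θ with
  | empty => simpa using h θ
  | insert a J _ ih =>
    have hJ : ∀ n, ‖u n * (if ∀ j ∈ J, ‖n • β j‖ < δ then 1 else 0)‖ ≤ 1 := by
      intro n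
      rw [norm_mul]
      refine mul_le_one₀ (hu n) (norm_nonneg _) ?_
      split_ifs <;> simp
    convert mul_ball hJ ih (β a) δ θ using 3 with n
    rw [mul_assoc, ite_zero_mul_ite_zero, mul_one]
    simp only [Finset.forall_mem_insert, and_comm]

end UniformlyNull

/-- Weak convergence of probability measures on a compact space can be tested on a family of
functions with dense linear span. -/
theorem MeasureTheory.ProbabilityMeasure.tendsto_of_span_dense {X ι : Type*} [TopologicalSpace X]
    [CompactSpace X] [MeasurableSpace X] [OpensMeasurableSpace X] {l : Filter ι}
    {ν : ι → ProbabilityMeasure X} {μ : ProbabilityMeasure X} {s : Set C(X, ℂ)}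
    (hs : (Submodule.span ℂ s).topologicalClosure = ⊤)
    (h : ∀ f ∈ s, Filter.Tendsto (fun i => ∫ x, f x ∂(ν i : Measure X)) l
      (nhds (∫ x, f x ∂(μ : Measure X)))) :
    Filter.Tendsto ν l (nhds μ) := by
  have hint : ∀ (ρ : ProbabilityMeasure X) (f : C(X, ℂ)), Integrable f (ρ : Measure X) :=
    fun ρ f => (BoundedContinuousFunction.mkOfCompact f).integrable _
  have hspan : ∀ p ∈ Submodule.span ℂ s, Filter.Tendsto (fun i => ∫ x, p x ∂(ν i : Measure X)) l
      (nhds (∫ x, p x ∂(μ : Measure X))) := by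
    intro p hp
    induction hp using Submodule.span_induction with
    | mem p hp => exact h p hp
    | zero => simpa using tendsto_const_nhds
    | add p q _ _ hp hq =>
      simp only [ContinuousMap.add_apply]
      simp_rw [fun ρ : ProbabilityMeasure X => integral_add (hint ρ p) (hint ρ q)]
      exact hp.add hq
    | smul c p _ hp =>
      simp only [ContinuousMap.smul_apply, integral_smul]
      exact hp.const_smul c
  rw [ProbabilityMeasure.tendsto_iff_forall_integral_rclike_tendsto ℂ]
  intro f
  have hf : f.toContinuousMap ∈ closure (Submodule.span ℂ s : Set C(X, ℂ)) := by
    rw [← Submodule.topologicalClosure_coe, hs]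
    trivial
  rw [Metric.tendsto_nhds]
  intro ε hε
  obtain ⟨p, hp, hfp⟩ := Metric.mem_closure_iff.1 hf (ε / 4) (by positivity)
  have happrox : ∀ ρ : ProbabilityMeasure X,
      dist (∫ x, f x ∂(ρ : Measure X)) (∫ x, p x ∂(ρ : Measure X)) ≤ ε / 4 := by
    intro ρ
    rw [dist_eq_norm, ← integral_sub (f.integrable _) (hint ρ p)]
    refine (norm_integral_le_of_norm_le_const (C := ε / 4) (.of_forall fun x => ?_)).trans ?_
    · rw [← dist_eq_norm]
      exact (ContinuousMap.dist_apply_le_dist (f := f.toContinuousMap) (g := p) x).trans hfp.le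
    · simp
  filter_upwards [Metric.tendsto_nhds.1 (hspan p hp) (ε / 4) (by positivity)] with i hi
  have h1 := happrox (ν i)
  have h2 := happrox μ
  rw [dist_comm] at h2
  linarith [dist_triangle4 (∫ x, f x ∂(ν i : Measure X)) (∫ x, p x ∂(ν i : Measure X))
    (∫ x, p x ∂(μ : Measure X)) (∫ x, f x ∂(μ : Measure X))]

/-- The uniform probability measure on the values of `x` along a nonempty finite set. -/
noncomputable def empiricalMeasure {X : Type*} [MeasurableSpace X] (A : Finset ℕ)
    (hA : A.Nonempty) (x : ℕ → X) : ProbabilityMeasure X :=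
  ⟨(A.card : ENNReal)⁻¹ • ∑ n ∈ A, Measure.dirac (x n), ⟨by
    simp [ENNReal.inv_mul_cancel, hA.ne_empty]⟩⟩

section empiricalMeasure

variable {X : Type*} [MeasurableSpace X] [MeasurableSingletonClass X] (A : Finset ℕ)
  (hA : A.Nonempty) (x : ℕ → X)

theorem integral_empiricalMeasure (f : X → ℂ) :
    ∫ y, f y ∂(empiricalMeasure A hA x : Measure X) = (A.card : ℂ)⁻¹ * ∑ n ∈ A, f (x n) := by
  change ∫ y, f y ∂((A.card : ENNReal)⁻¹ • ∑ n ∈ A, Measure.dirac (x n)) = _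
  rw [integral_smul_measure, integral_finsetSum_measure fun n _ => integrable_dirac (by simp)]
  simp

open Classical in
theorem empiricalMeasure_apply (s : Set X) :
    ((empiricalMeasure A hA x s : NNReal) : ℝ) =
      (A.filter fun n => x n ∈ s).card / A.card := by
  change (((A.card : ENNReal)⁻¹ • ∑ n ∈ A, Measure.dirac (x n)) s).toReal = _
  rw [Measure.smul_apply, Measure.finsetSum_apply, smul_eq_mul, ENNReal.toReal_mul]
  simp only [Measure.dirac_apply, Set.indicator_apply, Pi.one_apply, Finset.sum_boole]
  simp [div_eq_inv_mul]

end empiricalMeasure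

/-- Bohr sets are syndetic. -/
theorem exists_bohr_mem_Icc {r : ℕ} (β : Fin r → AddCircle (1 : ℝ)) {δ : ℝ} (hδ : 0 < δ) :
    ∃ R : ℕ, ∀ M : ℕ, ∃ n, M ≤ n ∧ n ≤ M + R ∧ ∀ j, ‖n • β j‖ < δ := by
  have htb : TotallyBounded (Set.range fun n : ℕ => n • β) :=
    isCompact_univ.totallyBounded.subset (Set.subset_univ _)
  obtain ⟨t, ht, htf, hcov⟩ := Metric.finite_approx_of_totallyBounded htb δ hδ
  have ht' : ∀ y ∈ t, ∃ n : ℕ, n • β = y := fun y hy => ht hy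
  choose! g hg using ht'
  refine ⟨htf.toFinset.sup g, fun M => ?_⟩
  obtain ⟨y, hy, hdist⟩ := Set.mem_iUnion₂.1
    (hcov ⟨M + htf.toFinset.sup g, rfl⟩)
  have hgy : g y ≤ htf.toFinset.sup g := Finset.le_sup (htf.mem_toFinset.2 hy)
  have hy' : g y • β = y := hg y hy
  generalize g y = a at hgy hy'
  subst hy'
  refine ⟨M + htf.toFinset.sup g - a, by omega, by omega, ?_⟩
  rw [← pi_norm_lt_iff hδ (x := fun j => (M + htf.toFinset.sup g - a) • β j)]
  have hsub : (fun j => (M + htf.toFinset.sup g - a) • β j) =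
      (M + htf.toFinset.sup g) • β - a • β := by
    funext j
    rw [Pi.sub_apply, Pi.smul_apply, Pi.smul_apply, sub_nsmul _ (by omega), sub_eq_add_neg]
  rw [hsub, ← dist_eq_norm]
  exact hdist

/-- Syndetic sets have positive lower density, uniformly over intervals. -/
theorem exists_pos_mul_le_card_of_syndetic (P : ℕ → Prop) [DecidablePred P] {R : ℕ}
    (h : ∀ M : ℕ, ∃ n, M ≤ n ∧ n ≤ M + R ∧ P n) :
    ∃ c : ℝ, 0 < c ∧ ∃ L : ℕ, 0 < L ∧ ∀ M N : ℕ, L ≤ N - M →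
      c * (N - M : ℕ) ≤ ((Finset.Ico M N).filter P).card := by
  refine ⟨1 / (2 * (R + 1)), by positivity, R + 1, R.succ_pos, fun M N hMN => ?_⟩
  have hcard : (N - M) / (R + 1) ≤ ((Finset.Ico M N).filter P).card := by
    choose g hg1 hg2 hg3 using h
    rw [← Finset.card_range ((N - M) / (R + 1))]
    refine Finset.card_le_card_of_injOn (fun k => g (M + k * (R + 1))) ?_ ?_
    · intro k hk
      rw [Finset.coe_range, Set.mem_Iio] at hk
      have h1 : (k + 1) * (R + 1) ≤ N - M :=
        (Nat.mul_le_mul_right _ hk).trans (Nat.div_mul_le_self _ _)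
      have h2 := hg1 (M + k * (R + 1))
      have h3 := hg2 (M + k * (R + 1))
      rw [add_mul] at h1
      simp only [Finset.coe_filter, Finset.mem_Ico, Set.mem_ofPred_eq]
      exact ⟨by omega, hg3 _⟩
    · have key : ∀ k k', k < k' → g (M + k * (R + 1)) < g (M + k' * (R + 1)) := by
        intro k k' hk
        have h1 : (k + 1) * (R + 1) ≤ k' * (R + 1) := Nat.mul_le_mul_right _ hk
        have h2 := hg2 (M + k * (R + 1))
        have h3 := hg1 (M + k' * (R + 1))
        rw [add_mul] at h1
        omega
      have hmono : StrictMono fun k => g (M + k * (R + 1)) := fun k k' hk => key k k' hk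
      exact hmono.injective.injOn
  have h1 : N - M < (R + 1) * ((N - M) / (R + 1) + 1) := Nat.lt_mul_div_succ _ R.succ_pos
  have h2 : 1 ≤ (N - M) / (R + 1) := (Nat.one_le_div_iff R.succ_pos).2 hMN
  have h3 : N - M ≤ 2 * (R + 1) * ((Finset.Ico M N).filter P).card := by nlinarith
  rw [one_div_mul_eq_div, div_le_iff₀ (by positivity)]
  have h4 : ((N - M : ℕ) : ℝ) ≤ 2 * (R + 1) * ((Finset.Ico M N).filter P).card := by
    exact_mod_cast h3
  linarith

instance UnitAddTorus.isProbabilityMeasure_volume {m : ℕ} :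
    IsProbabilityMeasure (volume : Measure (Fin m → AddCircle (1 : ℝ))) := by
  have : IsProbabilityMeasure (volume : Measure (AddCircle (1 : ℝ))) := ⟨by simp⟩
  rw [volume_pi]
  infer_instance

theorem AddCircle.volume_singleton (x : AddCircle (1 : ℝ)) : volume {x} = 0 := by
  rw [← Metric.closedBall_zero, AddCircle.volume_closedBall]
  simp

theorem AddCircle.frontier_image_Ico_subset (a b : ℝ) :
    frontier ((fun t : ℝ => (t : AddCircle (1 : ℝ))) '' Set.Ico a b) ⊆ {↑a, ↑b} := by
  rintro x ⟨hx1, hx2⟩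
  have hclosed : IsClosed ((fun t : ℝ => (t : AddCircle (1 : ℝ))) '' Set.Icc a b) :=
    (isCompact_Icc.image (AddCircle.continuous_mk' 1)).isClosed
  have hopen : IsOpen ((fun t : ℝ => (t : AddCircle (1 : ℝ))) '' Set.Ioo a b) :=
    QuotientAddGroup.isOpenMap_coe _ isOpen_Ioo
  obtain ⟨t, ht, rfl⟩ := closure_minimal (Set.image_mono Set.Ico_subset_Icc_self) hclosed hx1
  rcases eq_or_lt_of_le ht.1 with rfl | h1
  · exact Or.inl rfl
  rcases eq_or_lt_of_le ht.2 with rfl | h2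
  · exact Or.inr rfl
  exact absurd (interior_maximal (Set.image_mono Set.Ioo_subset_Ico_self) hopen
    ⟨t, ⟨h1, h2⟩, rfl⟩) hx2

theorem UnitAddTorus.volume_frontier_box {m : ℕ} (lo hi : Fin m → ℝ) :
    volume (frontier {x : Fin m → AddCircle (1 : ℝ) |
      ∀ j, x j ∈ (fun t : ℝ => (t : AddCircle (1 : ℝ))) '' Set.Ico (lo j) (hi j)}) = 0 := by
  have hbox : {x : Fin m → AddCircle (1 : ℝ) |
      ∀ j, x j ∈ (fun t : ℝ => (t : AddCircle (1 : ℝ))) '' Set.Ico (lo j) (hi j)} =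
      Set.univ.pi fun j => (fun t : ℝ => (t : AddCircle (1 : ℝ))) '' Set.Ico (lo j) (hi j) := by
    ext x
    simp only [Set.mem_ofPred_eq, Set.mem_pi, Set.mem_univ, true_imp_iff]
  have hsub : frontier (Set.univ.pi fun j =>
      (fun t : ℝ => (t : AddCircle (1 : ℝ))) '' Set.Ico (lo j) (hi j)) ⊆
      ⋃ j, Function.eval j ⁻¹'
        {((lo j : ℝ) : AddCircle (1 : ℝ)), ((hi j : ℝ) : AddCircle (1 : ℝ))} := by
    rintro x ⟨hx1, hx2⟩
    rw [closure_pi_set] at hx1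
    rw [interior_pi_set Set.finite_univ, Set.mem_univ_pi] at hx2
    obtain ⟨j, hj⟩ := not_forall.1 hx2
    exact Set.mem_iUnion.2 ⟨j, AddCircle.frontier_image_Ico_subset _ _
      ⟨hx1 j (Set.mem_univ j), hj⟩⟩
  rw [hbox]
  refine measure_mono_null hsub (measure_iUnion_null fun j => ?_)
  rw [volume_pi]
  refine Measure.pi_eval_preimage_null _ ?_
  rw [Set.insert_eq]
  exact measure_union_null (AddCircle.volume_singleton _) (AddCircle.volume_singleton _)

theorem UnitAddTorus.integral_mFourier_eq_zero {m : ℕ} {k : Fin m → ℤ} (hk : k ≠ 0) :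
    ∫ x : Fin m → AddCircle (1 : ℝ), UnitAddTorus.mFourier k x = 0 := by
  obtain ⟨j, hj⟩ := Function.ne_iff.1 hk
  change ∫ x : Fin m → AddCircle (1 : ℝ), ∏ i, fourier (k i) (x i) = 0
  rw [integral_fintype_prod_volume_eq_prod fun i => (fourier (k i) : AddCircle (1 : ℝ) → ℂ)]
  exact Finset.prod_eq_zero (Finset.mem_univ j)
    (integral_eq_zero_of_add_right_eq_neg (fourier_add_half_inv_index hj one_pos))

theorem UnitAddTorus.mFourier_sq {m : ℕ} (k : Fin m → ℤ) (α : Fin m → ℝ) (n : ℕ) :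
    UnitAddTorus.mFourier k (fun j => (((n : ℝ) ^ 2 * α j : ℝ) : AddCircle (1 : ℝ))) =
      AddCircle.toCircle (n ^ 2 • ((∑ j, k j * α j : ℝ) : AddCircle (1 : ℝ))) := by
  change ∏ i, fourier (k i) (((n : ℝ) ^ 2 * α i : ℝ) : AddCircle (1 : ℝ)) = _
  rw [← AddCircle.coe_nsmul, ← fourier_one, fourier_coe_apply]
  simp_rw [fourier_coe_apply]
  rw [← Complex.exp_sum]
  congr 1
  push_cast
  simp only [Finset.mul_sum, Finset.sum_div, nsmul_eq_mul]
  refine Finset.sum_congr rfl fun i _ => ?_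
  push_cast
  ring

/-- An integer combination of reals independent from `1` over `ℚ` is irrational. -/
theorem not_isOfFinAddOrder_of_linearIndependent {m : ℕ} {α : Fin m → ℝ}
    (hα : LinearIndependent ℚ (Fin.cons (1 : ℝ) α : Fin (m + 1) → ℝ)) {k : Fin m → ℤ}
    (hk : k ≠ 0) :
    ¬ IsOfFinAddOrder ((∑ j, k j * α j : ℝ) : AddCircle (1 : ℝ)) := by
  rw [isOfFinAddOrder_iff_nsmul_eq_zero]
  rintro ⟨d, hd, h⟩
  rw [← AddCircle.coe_nsmul, AddCircle.coe_eq_zero_iff] at h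
  obtain ⟨z, hz⟩ := h
  obtain ⟨j, hj⟩ := Function.ne_iff.1 hk
  have hrel := Fintype.linearIndependent_iff.1 hα
    (Fin.cons (-z : ℚ) fun j => (d : ℚ) * k j) ?_ j.succ
  · simp only [Fin.cons_succ, mul_eq_zero, Nat.cast_eq_zero, Int.cast_eq_zero] at hrel
    exact hrel.elim hd.ne' hj
  · rw [Fin.sum_univ_succ]
    simp only [Fin.cons_zero, Fin.cons_succ, Rat.smul_def]
    push_cast
    rw [zsmul_eq_mul, nsmul_eq_mul, Finset.mul_sum] at hz
    rw [neg_mul, hz, neg_add_eq_zero]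
    exact Finset.sum_congr rfl fun i _ => by ring

open Classical in
/-- The quadratic sequence `n ^ 2 • γ` with `γ` of infinite order has uniformly null exponential
sums along a Bohr set. -/
theorem uniformlyNull_bohr_mul_toCircle_sq {r : ℕ} (β : Fin r → AddCircle (1 : ℝ)) (δ : ℝ)
    {γ : AddCircle (1 : ℝ)} (hγ : ¬ IsOfFinAddOrder γ) :
    UniformlyNull fun n =>
      if ∀ j, ‖n • β j‖ < δ then (AddCircle.toCircle (n ^ 2 • γ) : ℂ) else 0 := by
  have h := UniformlyNull.mul_prod_ball (u := fun n => (AddCircle.toCircle (n ^ 2 • γ) : ℂ))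
    (fun n => (Circle.norm_coe _).le) (fun θ => ?_) β δ Finset.univ 0
  · simpa using h
  · simpa only [AddCircle.toCircle_add, Circle.coe_mul] using
      AddCircle.uniformlyNull_toCircle_sq hγ θ

open Classical Filter in
/-- Squares along a Bohr set equidistribute in the torus, uniformly over intervals. -/
theorem tendsto_empiricalMeasure_bohr_sq {r : ℕ} (β : Fin r → AddCircle (1 : ℝ)) {δ : ℝ}
    (hδ : 0 < δ) {m : ℕ} {α : Fin m → ℝ}
    (hα : LinearIndependent ℚ (Fin.cons (1 : ℝ) α : Fin (m + 1) → ℝ))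
    (A : ℕ × ℕ → Finset ℕ) (hA : ∀ p, (A p).Nonempty)
    (hAeq : ∀ p : ℕ × ℕ, ((Finset.Ico p.1 p.2).filter fun n => ∀ j, ‖n • β j‖ < δ).Nonempty →
      A p = (Finset.Ico p.1 p.2).filter fun n => ∀ j, ‖n • β j‖ < δ) :
    Tendsto (fun p => empiricalMeasure (A p) (hA p)
        fun n j => (((n : ℝ) ^ 2 * α j : ℝ) : AddCircle (1 : ℝ)))
      (comap (fun p : ℕ × ℕ => p.2 - p.1) atTop)
      (nhds ⟨volume, UnitAddTorus.isProbabilityMeasure_volume⟩) := by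
  refine ProbabilityMeasure.tendsto_of_span_dense UnitAddTorus.span_mFourier_closure_eq_top ?_
  rintro _ ⟨k, rfl⟩
  simp_rw [integral_empiricalMeasure]
  change Tendsto _ _ (nhds (∫ x : Fin m → AddCircle (1 : ℝ), UnitAddTorus.mFourier k x))
  by_cases hk : k = 0
  · subst hk
    simp only [UnitAddTorus.mFourier_zero, ContinuousMap.one_apply, Finset.sum_const,
      nsmul_eq_mul, mul_one, integral_const, probReal_univ, one_smul]
    refine tendsto_const_nhds.congr fun p => ?_
    exact (inv_mul_cancel₀ (Nat.cast_ne_zero.2 (hA p).card_ne_zero)).symm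
  rw [UnitAddTorus.integral_mFourier_eq_zero hk, Metric.tendsto_nhds]
  intro ε hε
  obtain ⟨R, hR⟩ := exists_bohr_mem_Icc β hδ
  obtain ⟨c, hc, L₁, hL₁, h₁⟩ := exists_pos_mul_le_card_of_syndetic _ hR
  obtain ⟨L₂, h₂⟩ := uniformlyNull_bohr_mul_toCircle_sq β δ
    (not_isOfFinAddOrder_of_linearIndependent hα hk) (ε / 2 * c) (by positivity)
  filter_upwards [preimage_mem_comap (mem_atTop (max L₁ L₂))] with p hp
  have hp : max L₁ L₂ ≤ p.2 - p.1 := hp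
  have h3 := h₁ p.1 p.2 ((le_max_left _ _).trans hp)
  have h4 := h₂ p.1 p.2 ((le_max_right _ _).trans hp)
  have hK : (0 : ℝ) < (p.2 - p.1 : ℕ) := by
    exact_mod_cast hL₁.trans_le ((le_max_left _ _).trans hp)
  have hcard : (0 : ℝ) <
      ((Finset.Ico p.1 p.2).filter fun n => ∀ j, ‖n • β j‖ < δ).card :=
    (mul_pos hc hK).trans_le h3
  rw [← Finset.sum_filter] at h4
  simp_rw [hAeq p (Finset.card_pos.1 (Nat.cast_pos.1 hcard)), UnitAddTorus.mFourier_sq]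
  rw [dist_zero_right, norm_mul, norm_inv, Complex.norm_natCast, inv_mul_eq_div, div_lt_iff₀ hcard]
  nlinarith

theorem squares_well_distributed_along_bohr_sets
    (S : Set ℕ) (hS : IsFiniteRankBohr0 S)
    (m : ℕ) (α : Fin m → ℝ)
    (hα : LinearIndependent ℚ (Fin.cons (1 : ℝ) α : Fin (m + 1) → ℝ))
    (lo hi : Fin m → ℝ) (I : Set (Fin m → AddCircle (1 : ℝ)))
    (hI : I = {x : Fin m → AddCircle (1 : ℝ) |
      ∀ j, x j ∈ (fun t : ℝ => (t : AddCircle (1 : ℝ))) '' Set.Ico (lo j) (hi j)}) :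
    ∀ ε : ℝ, 0 < ε → ∃ L : ℕ, ∀ M N : ℕ, M < N → N - M > L →
      (S ∩ Set.Ico M N).Nonempty ∧
      |(Set.ncard {n : ℕ | n ∈ S ∩ Set.Ico M N ∧
            (fun j => ((((n : ℝ) ^ 2 * α j : ℝ)) : AddCircle (1 : ℝ))) ∈ I} : ℝ) /
          ((S ∩ Set.Ico M N).ncard : ℝ) - (volume I).toReal| < ε := by
    classical
  obtain ⟨r, β, δ, hδ, rfl⟩ := hS
  obtain ⟨R, hR⟩ := exists_bohr_mem_Icc β hδ
  let B : ℕ × ℕ → Finset ℕ :=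
    fun p => (Finset.Ico p.1 p.2).filter fun n => ∀ j, ‖n • β j‖ < δ
  let A : ℕ × ℕ → Finset ℕ := fun p => if (B p).Nonempty then B p else {0}
  have hA : ∀ p, (A p).Nonempty := by
    intro p
    by_cases h : (B p).Nonempty
    · simpa only [A, if_pos h] using h
    · simp only [A, if_neg h, Finset.singleton_nonempty]
  have hAB : ∀ p, (B p).Nonempty → A p = B p := fun p h => if_pos h
  have hlim := ProbabilityMeasure.tendsto_measure_of_null_frontier_of_tendsto'
    (tendsto_empiricalMeasure_bohr_sq β hδ hα A hA hAB)
    (UnitAddTorus.volume_frontier_box lo hi)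
  rw [← hI] at hlim
  replace hlim := (ENNReal.tendsto_toReal
    (measure_ne_top (volume : Measure (Fin m → AddCircle (1 : ℝ))) I)).comp hlim
  intro ε hε
  have hev := Filter.eventually_comap.1 (Metric.tendsto_nhds.1 hlim ε hε)
  obtain ⟨L, hL⟩ := Filter.eventually_atTop.1 hev
  refine ⟨max L (R + 1), fun M N hMN hlen => ?_⟩
  have hset : {n : ℕ | ∀ j, ‖n • β j‖ < δ} ∩ Set.Ico M N = (B (M, N) : Set ℕ) := by
    ext n
    simp only [B, Set.mem_inter_iff, Set.mem_ofPred_eq, Set.mem_Ico, Finset.coe_filter,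
      Finset.mem_Ico, and_comm]
  have hne : (B (M, N)).Nonempty := by
    obtain ⟨n, h1, h2, h3⟩ := hR M
    have h4 := (le_max_right _ _).trans_lt hlen
    exact ⟨n, Finset.mem_filter.2 ⟨Finset.mem_Ico.2 ⟨h1, by omega⟩, h3⟩⟩
  have hdist := hL (N - M) ((le_max_left _ _).trans hlen.le) (M, N) rfl
  rw [hset]
  refine ⟨hne, ?_⟩
  have hfilter : {n : ℕ | n ∈ (B (M, N) : Set ℕ) ∧
      (fun j => (((n : ℝ) ^ 2 * α j : ℝ) : AddCircle (1 : ℝ))) ∈ I} =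
      ((B (M, N)).filter fun n =>
        (fun j => (((n : ℝ) ^ 2 * α j : ℝ) : AddCircle (1 : ℝ))) ∈ I : Finset ℕ) := by
    ext n
    simp only [Set.mem_ofPred_eq, Finset.coe_filter, Finset.mem_coe]
  rw [hfilter, Set.ncard_coe_finset, Set.ncard_coe_finset, ← hAB _ hne]
  rw [Real.dist_eq] at hdist
  have happly := empiricalMeasure_apply (A (M, N)) (hA (M, N))
    (fun n j => (((n : ℝ) ^ 2 * α j : ℝ) : AddCircle (1 : ℝ))) I
  rw [← happly]
  exact hdist
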